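/- arXiv:2302.04136 — 3 statements merged into one kernel-verified Lean document; each statement's English description precedes it below -/
import Mathlib

section
/- For every valley-decorated standardly labelled Dyck path P of size n, area(P) = revmaj(dw(P)), where dw(P) is the diagonal word of P and revmaj is the reverse major index of the underlying permutation. -/
/-!
Read the diagonal word `E 1, …, E n` together with the diagonals `A 1, …, A n` its letters come
from. Then `A 1 = 0`, and `A (p + 1) = A p + 1` or `A (p + 1) = A p` according to whether `p` is an
ascent of `E` or not:

* inside a diagonal the letters are decreasing, so there is no ascent;
* if diagonal `d + 1` is nonempty, the first north step reaching it is preceded by a step on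
  diagonal `d` with a smaller label (`exists_rise`). Hence no diagonal is skipped, and the last
  (smallest) letter of diagonal `d` is smaller than the first (largest) letter of diagonal `d + 1`.

So `A j` is the number of ascents before position `j`, and the area `∑ A j` counts each ascent `p`
exactly `n - p` times (`sum_eq_sum_increments`), which is its contribution to `revmaj`.
-/

open Finset

namespace QEuler

/-! ### Entries of a permutation of `{1,…,n}`, with the convention `σ₀ = 0`.
A permutation `σ ∈ S_n` is represented by `Equiv.Perm (Fin n)`; its entry at
position `i ∈ {1,…,n}` is `(σ (i-1)).val + 1 ∈ {1,…,n}`, and all other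
positions (in particular position `0`) carry the value `0`. -/

def ent {n : ℕ} (σ : Equiv.Perm (Fin n)) (i : ℕ) : ℕ :=
  if h : 1 ≤ i ∧ i ≤ n then ((σ ⟨i - 1, by omega⟩ : Fin n) : ℕ) + 1 else 0

/-- Decorations: a set `D : Finset (Fin n)` records the decorated positions,
`j : Fin n` encoding position `j+1 ∈ {1,…,n}`.  `isDec D i` tells whether
position `i` is decorated (position `0` never is). -/
def isDec {n : ℕ} (D : Finset (Fin n)) (i : ℕ) : Bool :=
  if h : 1 ≤ i ∧ i ≤ n then decide ((⟨i - 1, by omega⟩ : Fin n) ∈ D) else false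

/-- Number of decorated positions among `{1,…,n}` for a decoration predicate. -/
def decCount (n : ℕ) (D : ℕ → Bool) : ℕ :=
  ((Finset.Icc 1 n).filter fun i => D i = true).card

/-! ### Major index and reverse major index -/

/-- Major index of the word `E 1, E 2, …, E n`. -/
def maj (n : ℕ) (E : ℕ → ℕ) : ℕ :=
  ∑ i ∈ Finset.Icc 1 (n - 1), if E (i + 1) < E i then i else 0

/-- Reverse major index: the major index of the reversed word `E n, …, E 1`. -/
def revmaj (n : ℕ) (E : ℕ → ℕ) : ℕ := maj n fun i => E (n + 1 - i)

/-! ### Decreasing runs and schedule numbers -/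

/-- The word is strictly decreasing along consecutive positions `p,…,q`. -/
def decOn (E : ℕ → ℕ) (p q : ℕ) : Prop := ∀ t ∈ Finset.Ico p q, E (t + 1) < E t

instance (E : ℕ → ℕ) (p q : ℕ) : Decidable (decOn E p q) := by
  unfold decOn; infer_instance

/-- Start of the maximal strictly decreasing consecutive run containing position `i`. -/
def runStart (E : ℕ → ℕ) (i : ℕ) : ℕ :=
  Nat.find (show ∃ p, decOn E p i from ⟨i, fun t ht => absurd ht (by simp)⟩)

/-- End of the maximal strictly decreasing consecutive run containing position `i`
(positions are `0,…,n`). -/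
def runEnd (n : ℕ) (E : ℕ → ℕ) (i : ℕ) : ℕ :=
  Nat.findGreatest (fun q => decOn E i q) n

/-- The schedule number of a decorated permutation (given by its entry word `E` on
positions `0,…,n`, with `E 0 = 0`, and decoration predicate `D`) at position `i`.
If `σ_i` is undecorated and lies in run `r_j` it counts the undecorated entries of `r_j`
larger than `σ_i` plus the undecorated entries of `r_{j-1}` smaller than `σ_i`;
if `σ_i` is decorated it counts the undecorated entries of `r_j` smaller than `σ_i`
plus the undecorated entries of `r_{j+1}` larger than `σ_i`. -/
def schedNum (n : ℕ) (E : ℕ → ℕ) (D : ℕ → Bool) (i : ℕ) : ℕ :=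
  if D i = true then
    ((Finset.Icc (runStart E i) (runEnd n E i)).filter fun t => D t = false ∧ E t < E i).card
      + (if runEnd n E i < n then
          ((Finset.Icc (runEnd n E i + 1) (runEnd n E (runEnd n E i + 1))).filter
            fun t => D t = false ∧ E i < E t).card
        else 0)
  else
    ((Finset.Icc (runStart E i) (runEnd n E i)).filter fun t => D t = false ∧ E i < E t).card
      + (if runStart E i = 0 then 0 else
          ((Finset.Icc (runStart E (runStart E i - 1)) (runStart E i - 1)).filter
            fun t => D t = false ∧ E t < E i).card)

/-! ### Cyclic runs -/

/-- `σ_i,…,σ_j` is a cyclic (decreasing) run: for some shift `k`, the residues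
`σ_t + k (mod n+1)` are strictly decreasing for `t = i,…,j`. -/
def IsCyclicRun (n : ℕ) (E : ℕ → ℕ) (i j : ℕ) : Prop :=
  i ≤ j ∧ j ≤ n ∧ ∃ k : ℕ, ∀ t ∈ Finset.Ico i j, (E (t + 1) + k) % (n + 1) < (E t + k) % (n + 1)

/-- A cyclic run which cannot be extended to the left. -/
def LeftMaximalRun (n : ℕ) (E : ℕ → ℕ) (i j : ℕ) : Prop :=
  IsCyclicRun n E i j ∧ (i = 0 ∨ ¬ IsCyclicRun n E (i - 1) j)

/-- A cyclic run which cannot be extended to the right. -/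
def RightMaximalRun (n : ℕ) (E : ℕ → ℕ) (i j : ℕ) : Prop :=
  IsCyclicRun n E i j ∧ (j = n ∨ ¬ IsCyclicRun n E i (j + 1))

/-! ### Double ascents, descents, peaks, valleys; `inv3` and `monot` -/

def DblAsc (E : ℕ → ℕ) (j : ℕ) : Prop := E (j - 2) < E (j - 1) ∧ E (j - 1) < E j
def DblDesc (E : ℕ → ℕ) (j : ℕ) : Prop := E (j - 1) < E (j - 2) ∧ E j < E (j - 1)
def IsPeak (E : ℕ → ℕ) (j : ℕ) : Prop := E (j - 2) < E (j - 1) ∧ E j < E (j - 1)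
def IsValley (E : ℕ → ℕ) (j : ℕ) : Prop := E (j - 1) < E (j - 2) ∧ E (j - 1) < E j

instance (E : ℕ → ℕ) (j : ℕ) : Decidable (DblAsc E j) := by unfold DblAsc; infer_instance
instance (E : ℕ → ℕ) (j : ℕ) : Decidable (DblDesc E j) := by unfold DblDesc; infer_instance
instance (E : ℕ → ℕ) (j : ℕ) : Decidable (IsPeak E j) := by unfold IsPeak; infer_instance
instance (E : ℕ → ℕ) (j : ℕ) : Decidable (IsValley E j) := by unfold IsValley; infer_instance

/-- `(i,j)` is a 3-inversion. -/
def Inv3Pair (E : ℕ → ℕ) (i j : ℕ) : Prop :=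
  (DblAsc E j ∧ E (j - 1) < E i ∧ E i < E j) ∨
  (DblDesc E j ∧ E j < E i ∧ E i < E (j - 1)) ∨
  (IsPeak E j ∧ E j < E i) ∨
  (IsValley E j ∧ E i < E j)

instance (E : ℕ → ℕ) (i j : ℕ) : Decidable (Inv3Pair E i j) := by
  unfold Inv3Pair; infer_instance

/-- Number of 3-inversions of the word `E 1, …, E n` (with the convention `E 0 = 0`). -/
def inv3 (n : ℕ) (E : ℕ → ℕ) : ℕ :=
  ((Finset.Icc 1 n ×ˢ Finset.Icc 1 n).filter fun p => p.1 < p.2 ∧ Inv3Pair E p.1 p.2).card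

/-- Number of double ascents and double descents. -/
def monot (n : ℕ) (E : ℕ → ℕ) : ℕ :=
  ((Finset.Icc 2 n).filter fun j => DblAsc E j ∨ DblDesc E j).card

/-! ### Alternating permutations, `31-2` patterns and Chebikin's statistic -/

/-- `σ₁ > σ₂ < σ₃ > ⋯`. -/
def IsAlternating (n : ℕ) (E : ℕ → ℕ) : Prop :=
  ∀ i ∈ Finset.Icc 1 (n - 1), if Odd i then E (i + 1) < E i else E i < E (i + 1)

instance (n : ℕ) (E : ℕ → ℕ) : Decidable (IsAlternating n E) := by
  unfold IsAlternating; infer_instance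

/-- The finset of alternating permutations of `{1,…,n}`. -/
def altPerms (n : ℕ) : Finset (Equiv.Perm (Fin n)) :=
  Finset.univ.filter fun σ => IsAlternating n (ent σ)

/-- Number of `31-2` patterns: pairs `(i,j)` with `i+1 < j ≤ n` and `σ_j > σ_i > σ_{i+1}`. -/
def pat312 (n : ℕ) (E : ℕ → ℕ) : ℕ :=
  ((Finset.Icc 1 n ×ˢ Finset.Icc 1 n).filter fun p =>
    p.1 + 1 < p.2 ∧ E (p.1 + 1) < E p.1 ∧ E p.1 < E p.2).card

/-- Chebikin's alternating inversion statistic `î`. -/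
def chebi (n : ℕ) (E : ℕ → ℕ) : ℕ :=
  ∑ i ∈ Finset.Icc 1 (n - 1),
    ((Finset.Icc (i + 1) n).filter fun j => if Odd i then E j < E i else E i < E j).card

/-! ### Insertion `η_l`, structural attribute `ã`, the shift `k + τ` and `δ_k` -/

/-- The entry word of the insertion `η_l(σ) ∈ S_{n+1}` of the value `l` at the end of `σ ∈ S_n`. -/
def etaEnt (n l : ℕ) (E : ℕ → ℕ) (i : ℕ) : ℕ :=
  if i = n + 1 then l
  else if 1 ≤ i ∧ i ≤ n then (if l ≤ E i then E i + 1 else E i) else 0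

/-- Structural attribute `ã(σ)` of `σ ∈ S_n`. -/
def atil (n : ℕ) (E : ℕ → ℕ) : ℕ :=
  if E (n - 1) < E n then n + 1 - E n else E n

/-- The entry word of `k + τ ∈ S_{n+1}` for `τ ∈ S_n`:
`σ₀ = 0` and `σ_{i+1}` is the representative of `k + τ_i (mod n+1)` in `{1,…,n+1}`. -/
def shiftEnt (n k : ℕ) (E : ℕ → ℕ) (i : ℕ) : ℕ :=
  if i = 0 then 0
  else if (k + E (i - 1)) % (n + 1) = 0 then n + 1 else (k + E (i - 1)) % (n + 1)

/-- Position of the first (leftmost, among `1,…,n`) undecorated letter;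
equals `n+1` if every position is decorated. -/
def firstUndecPos (n : ℕ) (D : ℕ → Bool) : ℕ :=
  Nat.find (show ∃ i, n < i ∨ (1 ≤ i ∧ D i = false) from ⟨n + 1, Or.inl (by omega)⟩)

/-- `a(τ)`: the value of the first undecorated letter of `τ`. -/
def aVal (n : ℕ) (E : ℕ → ℕ) (D : ℕ → Bool) : ℕ := E (firstUndecPos n D)

/-- Decorations of the `k`-th descendant `δ_k(τ)`: position `1` is decorated iff
`k > n+1-a(τ)`, and for `i ≥ 2` position `i` is decorated iff position `i-1` of `τ` is. -/
def deltaDec (n k : ℕ) (D : ℕ → Bool) (aval : ℕ) (i : ℕ) : Bool :=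
  if i = 0 then false
  else if i = 1 then decide (n + 1 - aval < k)
  else D (i - 1)

/-! ### Valley-decorated standardly labelled Dyck paths

A path of size `n` is encoded by its area word `a : Fin n → Fin n`
(`a i` = number of whole squares between the `(i+1)`-st north step and the diagonal;
a word `a₁ ⋯ a_n` is the area word of a Dyck path iff `a₁ = 0` and `a_i ≤ a_{i-1} + 1`),
its labelling `w : Equiv.Perm (Fin n)`, and its decoration set `dv : Finset (Fin n)`
(`j` encoding the position `j+1`). -/

abbrev PathData (n : ℕ) := (Fin n → Fin n) × Equiv.Perm (Fin n) × Finset (Fin n)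

/-- The area word, on positions `1,…,n`. -/
def aw {n : ℕ} (P : PathData n) (i : ℕ) : ℕ :=
  if h : 1 ≤ i ∧ i ≤ n then ((P.1 ⟨i - 1, by omega⟩ : Fin n) : ℕ) else 0

/-- The labels, on positions `1,…,n`. -/
def lbl {n : ℕ} (P : PathData n) (i : ℕ) : ℕ := ent P.2.1 i

/-- Whether the `i`-th north step is decorated. -/
def pdec {n : ℕ} (P : PathData n) (i : ℕ) : Bool := isDec P.2.2 i

/-- The `i`-th north step is a contractible valley: `a_{i-1} > a_i`, or
`a_{i-1} = a_i` and `w_{i-1} < w_i`. -/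
def ContractibleValley {n : ℕ} (P : PathData n) (i : ℕ) : Prop :=
  2 ≤ i ∧ i ≤ n ∧ (aw P i < aw P (i - 1) ∨ (aw P (i - 1) = aw P i ∧ lbl P (i - 1) < lbl P i))

instance {n : ℕ} (P : PathData n) (i : ℕ) : Decidable (ContractibleValley P i) := by
  unfold ContractibleValley; infer_instance

/-- `P` encodes a genuine valley-decorated standardly labelled Dyck path:
the area word is valid, labels in a common column increase from bottom to top
(equivalently, consecutive north steps carry increasing labels), and every
decoration sits on a contractible valley. -/
def IsValidPath {n : ℕ} (P : PathData n) : Prop :=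
  (1 ≤ n → aw P 1 = 0) ∧
  (∀ i ∈ Finset.Icc 2 n, aw P i ≤ aw P (i - 1) + 1) ∧
  (∀ i ∈ Finset.Icc 2 n, aw P i = aw P (i - 1) + 1 → lbl P (i - 1) < lbl P i) ∧
  (∀ i ∈ Finset.Icc 1 n, pdec P i = true → ContractibleValley P i)

instance {n : ℕ} (P : PathData n) : Decidable (IsValidPath P) := by
  unfold IsValidPath; infer_instance

/-- The finset `stLD(n)^{•k}` of valley-decorated standardly labelled Dyck paths
of size `n` with exactly `k` decorated (contractible) valleys. -/
def stLD (n k : ℕ) : Finset (PathData n) :=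
  Finset.univ.filter fun P => IsValidPath P ∧ P.2.2.card = k

/-- The area statistic. -/
def area {n : ℕ} (P : PathData n) : ℕ := ∑ i ∈ Finset.Icc 1 n, aw P i

/-- `(i,j)` is a primary diagonal inversion. -/
def PrimaryDinv {n : ℕ} (P : PathData n) (i j : ℕ) : Prop :=
  aw P i = aw P j ∧ lbl P i < lbl P j ∧ pdec P i = false

/-- `(i,j)` is a secondary diagonal inversion. -/
def SecondaryDinv {n : ℕ} (P : PathData n) (i j : ℕ) : Prop :=
  aw P i = aw P j + 1 ∧ lbl P j < lbl P i ∧ pdec P i = false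

instance {n : ℕ} (P : PathData n) (i j : ℕ) : Decidable (PrimaryDinv P i j) := by
  unfold PrimaryDinv; infer_instance
instance {n : ℕ} (P : PathData n) (i j : ℕ) : Decidable (SecondaryDinv P i j) := by
  unfold SecondaryDinv; infer_instance

/-- The set of diagonal-inversion pairs `(i,j)`, `1 ≤ i < j ≤ n`. -/
def dinvPairs {n : ℕ} (P : PathData n) : Finset (ℕ × ℕ) :=
  (Finset.Icc 1 n ×ˢ Finset.Icc 1 n).filter fun p =>
    p.1 < p.2 ∧ (PrimaryDinv P p.1 p.2 ∨ SecondaryDinv P p.1 p.2)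

/-- `dinv(P)`: number of primary and secondary diagonal inversions minus the
number of decorated valleys (a nonnegative quantity). -/
def dinv {n : ℕ} (P : PathData n) : ℕ := (dinvPairs P).card - P.2.2.card

/-! ### The diagonal word of a path -/

/-- Position in the diagonal word of the label of the `i`-th north step:
labels are listed diagonal by diagonal, and within a diagonal in decreasing order. -/
def dwPos {n : ℕ} (P : PathData n) (i : ℕ) : ℕ :=
  ((Finset.Icc 1 n).filter fun i' =>
    aw P i' < aw P i ∨ (aw P i' = aw P i ∧ lbl P i ≤ lbl P i')).card

/-- The `j`-th letter of the diagonal word `dw(P)`. -/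
def dwEnt {n : ℕ} (P : PathData n) (j : ℕ) : ℕ :=
  ∑ i ∈ (Finset.Icc 1 n).filter (fun i => dwPos P i = j), lbl P i

/-- Whether the `j`-th letter of the diagonal word is decorated. -/
def dwDec {n : ℕ} (P : PathData n) (j : ℕ) : Bool :=
  decide (((Finset.Icc 1 n).filter fun i => dwPos P i = j ∧ pdec P i = true).Nonempty)

end QEuler

namespace QEuler

/-- All schedule numbers of the decorated permutation equal `1`. -/
def HasSchedOne (n : ℕ) (E : ℕ → ℕ) (D : ℕ → Bool) : Prop :=
  ∀ i ∈ Finset.Icc 1 n, schedNum n E D i = 1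

instance (n : ℕ) (E : ℕ → ℕ) (D : ℕ → Bool) : Decidable (HasSchedOne n E D) := by
  unfold HasSchedOne; infer_instance

/-- The diagonal word of `P` is the decorated permutation `(σ, D)`. -/
def DwEq {n : ℕ} (P : PathData n) (σ : Equiv.Perm (Fin n)) (D : Finset (Fin n)) : Prop :=
  (∀ j ∈ Finset.Icc 1 n, dwEnt P j = ent σ j) ∧ ∀ j ∈ Finset.Icc 1 n, dwDec P j = isDec D j

instance {n : ℕ} (P : PathData n) (σ : Equiv.Perm (Fin n)) (D : Finset (Fin n)) :
    Decidable (DwEq P σ D) := by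
  unfold DwEq; infer_instance

end QEuler

open QEuler

namespace QEuler

/-! ### Positions in the diagonal word -/

/-- The (non-strict) order in which the diagonal word lists the north steps `i` and `j`:
by diagonal, and by decreasing label within a diagonal. -/
def DiagLE {n : ℕ} (P : PathData n) (i j : ℕ) : Prop :=
  aw P i < aw P j ∨ (aw P i = aw P j ∧ lbl P j ≤ lbl P i)

lemma dwPos_mono {n : ℕ} (P : PathData n) {i j : ℕ} (h : DiagLE P i j) :
    dwPos P i ≤ dwPos P j := by
  unfold DiagLE at h
  apply Finset.card_le_card
  intro k hk
  simp only [Finset.mem_filter] at hk ⊢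
  refine ⟨hk.1, ?_⟩
  omega

lemma dwPos_lt {n : ℕ} (P : PathData n) {i j : ℕ} (hi : i ∈ Finset.Icc 1 n)
    (h : ¬ DiagLE P i j) : dwPos P j < dwPos P i := by
  unfold DiagLE at h
  apply Finset.card_lt_card
  rw [Finset.ssubset_iff_of_subset]
  · refine ⟨i, ?_, ?_⟩
    · exact Finset.mem_filter.mpr ⟨hi, Or.inr ⟨rfl, le_rfl⟩⟩
    · simp only [Finset.mem_filter]
      exact fun h' => h h'.2
  · intro k hk
    simp only [Finset.mem_filter] at hk ⊢
    refine ⟨hk.1, ?_⟩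
    omega

lemma diagLE_of_dwPos_le {n : ℕ} (P : PathData n) {i j : ℕ} (hi : i ∈ Finset.Icc 1 n)
    (h : dwPos P i ≤ dwPos P j) : DiagLE P i j := by
  by_contra h'
  exact absurd (dwPos_lt P hi h') (by omega)

lemma lbl_inj {n : ℕ} (P : PathData n) {i j : ℕ} (hi : i ∈ Finset.Icc 1 n)
    (hj : j ∈ Finset.Icc 1 n) (h : lbl P i = lbl P j) : i = j := by
  rw [Finset.mem_Icc] at hi hj
  unfold lbl ent at h
  rw [dif_pos hi, dif_pos hj] at h
  have h2 := P.2.1.injective (Fin.ext (Nat.succ_injective h))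
  have h3 := congrArg Fin.val h2
  simp only at h3
  omega

lemma dwPos_injOn {n : ℕ} (P : PathData n) : Set.InjOn (dwPos P) (Finset.Icc 1 n) := by
  intro i hi j hj h
  have h1 := diagLE_of_dwPos_le P hi h.le
  have h2 := diagLE_of_dwPos_le P hj h.ge
  unfold DiagLE at h1 h2
  exact lbl_inj P hi hj (by omega)

lemma dwPos_mem {n : ℕ} (P : PathData n) {i : ℕ} (hi : i ∈ Finset.Icc 1 n) :
    dwPos P i ∈ Finset.Icc 1 n := by
  rw [Finset.mem_Icc]
  constructor
  · apply Finset.card_pos.mpr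
    exact ⟨i, Finset.mem_filter.mpr ⟨hi, Or.inr ⟨rfl, le_rfl⟩⟩⟩
  · exact (Finset.card_filter_le _ _).trans (by simp)

lemma dwEnt_dwPos {n : ℕ} (P : PathData n) {i : ℕ} (hi : i ∈ Finset.Icc 1 n) :
    dwEnt P (dwPos P i) = lbl P i := by
  unfold dwEnt
  have : (Finset.Icc 1 n).filter (fun k => dwPos P k = dwPos P i) = {i} := by
    ext k
    simp only [Finset.mem_filter, Finset.mem_singleton]
    exact ⟨fun h => dwPos_injOn P h.1 hi h.2, fun h => by subst h; exact ⟨hi, rfl⟩⟩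
  rw [this, Finset.sum_singleton]

/-! ### Ascents of the diagonal word -/

/-- If some north step lies on diagonal `d + 1` or above, then the first such step lies on diagonal
`d + 1` and directly above a step of diagonal `d`, so that the labels increase there. -/
lemma exists_rise {n : ℕ} (P : PathData n) (hP : IsValidPath P) (d : ℕ)
    (h : ∃ i, i ∈ Finset.Icc 1 n ∧ d + 1 ≤ aw P i) :
    ∃ i, i ∈ Finset.Icc 1 n ∧ i + 1 ∈ Finset.Icc 1 n ∧ aw P i = d ∧ aw P (i + 1) = d + 1 ∧
      lbl P i < lbl P (i + 1) := by
  classical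
  obtain ⟨hm, hd⟩ := Nat.find_spec h
  have hmin := fun k (hk : k < Nat.find h) => Nat.find_min h hk
  generalize Nat.find h = m at hm hd hmin
  obtain ⟨h1, h2, h3, -⟩ := hP
  rw [Finset.mem_Icc] at hm
  have hm2 : m ≠ 1 := by
    rintro rfl
    have := h1 hm.2
    omega
  obtain ⟨i, rfl⟩ : ∃ i, m = i + 1 := ⟨m - 1, by omega⟩
  have hi : i ∈ Finset.Icc 1 n := by rw [Finset.mem_Icc]; omega
  have hi2 : i + 1 ∈ Finset.Icc 2 n := by rw [Finset.mem_Icc]; omega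
  have e1 := h2 _ hi2
  have e2 := h3 _ hi2
  simp only [Nat.add_sub_cancel] at e1 e2
  have e3 : ¬ d + 1 ≤ aw P i := fun h' => hmin i (by omega) ⟨hi, h'⟩
  exact ⟨i, hi, by rw [Finset.mem_Icc]; omega, by omega, by omega, e2 (by omega)⟩

/-- Along the diagonal word, the diagonal goes up by one at each ascent and is constant
elsewhere; here `i` and `j` are the north steps at consecutive positions. -/
lemma aw_succ {n : ℕ} (P : PathData n) (hP : IsValidPath P) {i j : ℕ}
    (hj : j ∈ Finset.Icc 1 n) (hij : dwPos P j = dwPos P i + 1) :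
    aw P j = aw P i + if lbl P i < lbl P j then 1 else 0 := by
  have h1 : ¬ DiagLE P j i := fun h => by
    have := dwPos_mono P h
    omega
  -- no north step lies strictly between `i` and `j` in the order of the diagonal word
  have gap : ∀ k ∈ Finset.Icc 1 n, DiagLE P k i ∨ DiagLE P j k := by
    intro k hk
    rcases Nat.lt_or_ge (dwPos P i) (dwPos P k) with h | h
    · exact Or.inr (diagLE_of_dwPos_le P hj (by omega))
    · exact Or.inl (diagLE_of_dwPos_le P hk h)
  unfold DiagLE at h1 gap
  by_cases hlt : aw P i < aw P j
  · obtain ⟨k, hk, hk', e1, e2, e3⟩ := exists_rise P hP (aw P i) ⟨j, hj, hlt⟩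
    have g1 := gap k hk
    have g2 := gap (k + 1) hk'
    rw [if_pos (by omega)]
    omega
  · rw [if_neg (by omega)]
    omega

/-! ### Summing over the ascents -/

/-- Abel summation: in the sum of a sequence starting at `0`, the increment at `p` is counted once
for each later term. -/
lemma sum_eq_sum_increments (A c : ℕ → ℕ) (n : ℕ) (h0 : A 0 = 0)
    (h : ∀ p < n, A (p + 1) = A p + c p) :
    A n = ∑ p ∈ Finset.range n, c p ∧
      ∑ j ∈ Finset.range (n + 1), A j = ∑ p ∈ Finset.range n, (n - p) * c p := by
  induction n with
  | zero => simp [h0]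
  | succ n ih =>
    obtain ⟨i1, i2⟩ := ih fun p hp => h p (by omega)
    have hA := h n (by omega)
    constructor
    · rw [Finset.sum_range_succ, hA, i1]
    · rw [Finset.sum_range_succ, i2, hA, i1, Finset.sum_range_succ, ← add_assoc,
        ← Finset.sum_add_distrib]
      congr 1
      · apply Finset.sum_congr rfl
        intro p hp
        rw [Finset.mem_range] at hp
        rw [show n + 1 - p = (n - p) + 1 by omega]
        ring
      · simp

end QEuler

/-- For every valley-decorated standardly labelled Dyck path `P` of size `n`,
`area(P) = revmaj(dw(P))`. -/
theorem area_eq_revmaj_dw {n : ℕ} (P : PathData n) (hP : IsValidPath P) :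
    area P = revmaj n (dwEnt P) := by
  rcases n with _ | m
  · simp [area, revmaj, maj]
  have hmaps : Set.MapsTo (dwPos P) (Finset.Icc 1 (m + 1)) (Finset.Icc 1 (m + 1)) :=
    fun i hi => dwPos_mem P hi
  have hsurj : ∀ p ∈ Finset.range (m + 1), ∃ i ∈ Finset.Icc 1 (m + 1), dwPos P i = p + 1 := by
    intro p hp
    rw [Finset.mem_range] at hp
    obtain ⟨i, hi, h⟩ := Finset.surjOn_of_injOn_of_card_le (dwPos P) hmaps (dwPos_injOn P) le_rfl
      (show p + 1 ∈ (↑(Finset.Icc 1 (m + 1)) : Set ℕ) by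
        rw [Finset.mem_coe, Finset.mem_Icc]; omega)
    exact ⟨i, hi, h⟩
  choose! s hs hpos using hsurj
  have hE : ∀ p ∈ Finset.range (m + 1), dwEnt P (p + 1) = lbl P (s p) := by
    intro p hp
    rw [← hpos p hp, dwEnt_dwPos P (hs p hp)]
  have hsum : area P = ∑ p ∈ Finset.range (m + 1), aw P (s p) := by
    unfold area
    symm
    refine Finset.sum_bij' (fun p _ => s p) (fun i _ => dwPos P i - 1) hs ?_ ?_ ?_ ?_
    · intro i hi
      have := Finset.mem_Icc.mp (dwPos_mem P hi)
      rw [Finset.mem_range]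
      omega
    · intro p hp
      simp only [hpos p hp, Nat.add_sub_cancel]
    · intro i hi
      have h := Finset.mem_Icc.mp (dwPos_mem P hi)
      have hr : dwPos P i - 1 ∈ Finset.range (m + 1) := by rw [Finset.mem_range]; omega
      apply dwPos_injOn P (hs _ hr) hi
      rw [hpos _ hr]
      omega
    · intro p _
      rfl
  have h0 : aw P (s 0) = 0 := by
    have hr : 0 ∈ Finset.range (m + 1) := by simp
    have h1 : 1 ∈ Finset.Icc 1 (m + 1) := by simp
    have hle := diagLE_of_dwPos_le P (hs 0 hr) (j := 1) (by
      rw [hpos 0 hr]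
      exact (Finset.mem_Icc.mp (dwPos_mem P h1)).1)
    have := hP.1 (by omega)
    unfold DiagLE at hle
    omega
  have hstep : ∀ p < m, aw P (s (p + 1)) =
      aw P (s p) + if dwEnt P (p + 1) < dwEnt P (p + 1 + 1) then 1 else 0 := by
    intro p hp
    have r1 : p ∈ Finset.range (m + 1) := by rw [Finset.mem_range]; omega
    have r2 : p + 1 ∈ Finset.range (m + 1) := by rw [Finset.mem_range]; omega
    rw [hE p r1, hE (p + 1) r2]
    exact aw_succ P hP (hs _ r2) (by rw [hpos _ r1, hpos _ r2])
  rw [hsum, (sum_eq_sum_increments (fun p => aw P (s p)) _ m h0 hstep).2]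
  unfold revmaj maj
  -- the ascent at position `p + 1` of the word is the descent at position `m - p` of its reverse
  refine Finset.sum_bij' (fun p _ => m - p) (fun i _ => m - i) ?_ ?_ ?_ ?_ ?_
  · intro p hp
    rw [Finset.mem_range] at hp
    rw [Finset.mem_Icc]
    omega
  · intro i hi
    rw [Finset.mem_Icc] at hi
    rw [Finset.mem_range]
    omega
  · intro p hp
    rw [Finset.mem_range] at hp
    omega
  · intro i hi
    rw [Finset.mem_Icc] at hi
    omega
  · intro p hp
    rw [Finset.mem_range] at hp
    beta_reduce
    rw [show m + 1 + 1 - (m - p + 1) = p + 1 by omega,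
      show m + 1 + 1 - (m - p) = p + 1 + 1 by omega]
    simp only [mul_ite, mul_one, mul_zero]
end

section
/- Let σ be a decorated permutation of {1,…,n} with schedule numbers (s_1,…,s_n). If s_i > 0 for all i ∈ {1,…,n}, then there exists j ≥ 1 such that the set {s_i : 1 ≤ i ≤ n} equals {1,2,…,j}. -/
/-!
Say that position `t` is *seen* from a later position `i` when `σ_t, …, σ_i` is either strictly
decreasing, or has exactly one ascent and satisfies `σ_t < σ_i` (`Sees`). For an undecorated `i`,
the schedule number is the number `leftCount` of undecorated `t < i` seen from `i`
(`schedNum_undec`); for a decorated `i`, it is the number of undecorated `t > i` from which `i` is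
seen (`schedNum_dec`). The relation is stable under shrinking the interval `[t, i]` at either end
(`Sees.shrink_right`, `Sees.shrink_left`).

Consequently `leftCount` grows by at most one from an undecorated position to the next undecorated
one, and it starts at `0` at position `0`; by discrete continuity, it takes every positive value up
to the one it has at any undecorated position (`leftCount_attains`). For a decorated `i` with
schedule number `m`, let `v` be the last undecorated position from which `i` is seen. The other
`m - 1` undecorated positions counted by `i` are all seen from `v`, so `m - 1 ≤ s_v` and every value
in `{1, …, m - 1}` is attained too. The set of schedule numbers is therefore closed under passing to
smaller positive integers, and positivity excludes `0`.
-/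

open Finset

open QEuler

namespace QEuler

/-! ### Runs -/

lemma decOn.mono {E : ℕ → ℕ} {p q p' q' : ℕ} (h : decOn E p q) (hp : p ≤ p') (hq : q' ≤ q) :
    decOn E p' q' := fun t ht => h t (by simp only [Finset.mem_Ico] at ht ⊢; omega)

lemma decOn.lt {E : ℕ → ℕ} {p q : ℕ} (h : decOn E p q) (hpq : p < q) : E q < E p := by
  induction q, hpq using Nat.le_induction with
  | base => exact h p (by simp)
  | succ q hq ih =>
    have h1 := ih (h.mono le_rfl (by omega))
    have h2 := h q (by simp only [Finset.mem_Ico]; omega)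
    omega

lemma decOn.step {E : ℕ → ℕ} {p q t : ℕ} (h : decOn E p q) (h1 : p ≤ t) (h2 : t < q) :
    E (t + 1) < E t := h t (by simp only [Finset.mem_Ico]; omega)

lemma decOn_of_le {E : ℕ → ℕ} {p q : ℕ} (h : q ≤ p) : decOn E p q :=
  fun t ht => by simp only [Finset.mem_Ico] at ht; omega

lemma decOn.trans {E : ℕ → ℕ} {p q r : ℕ} (h : decOn E p q) (h' : decOn E q r) :
    decOn E p r := fun t ht => by
  simp only [Finset.mem_Ico] at ht
  rcases lt_or_ge t q with htq | htq
  · exact h.step ht.1 htq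
  · exact h'.step htq ht.2

lemma runStart_le_iff (E : ℕ → ℕ) (p i : ℕ) : runStart E i ≤ p ↔ decOn E p i := by
  constructor
  · intro h
    have h0 : decOn E (runStart E i) i := by
      unfold runStart
      exact Nat.find_spec (show ∃ p, decOn E p i from ⟨i, fun t ht => absurd ht (by simp)⟩)
    exact h0.mono h le_rfl
  · intro h
    exact Nat.find_min' _ h

lemma le_runEnd_iff {n : ℕ} (E : ℕ → ℕ) {i q : ℕ} (hi : i ≤ n) :
    q ≤ runEnd n E i ↔ q ≤ n ∧ decOn E i q := by
  constructor
  · intro h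
    have h0 : decOn E i (runEnd n E i) :=
      Nat.findGreatest_spec (P := fun q => decOn E i q) hi (decOn_of_le le_rfl)
    exact ⟨h.trans (Nat.findGreatest_le n), h0.mono le_rfl h⟩
  · rintro ⟨h, h'⟩
    exact Nat.le_findGreatest h h'

/-! ### Positions seen from a later position -/

/-- `E` has exactly one ascent between positions `t` and `i`, and `E t < E i`. That is, `i` lies in
the decreasing run following that of `t`, and its entry is larger. -/
def SeesAcross (E : ℕ → ℕ) (t i : ℕ) : Prop :=
  ∃ b, t ≤ b ∧ b < i ∧ decOn E t b ∧ E b < E (b + 1) ∧ decOn E (b + 1) i ∧ E t < E i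

/-- Position `t` is seen from the later position `i`: either both lie in the same decreasing run,
or `i` lies in the next run and carries a larger entry. -/
def Sees (E : ℕ → ℕ) (t i : ℕ) : Prop := decOn E t i ∨ SeesAcross E t i

lemma Sees.shrink_right {E : ℕ → ℕ} {t i i' : ℕ} (h : Sees E t i') (hi : i < i') :
    Sees E t i := by
  rcases h with h | ⟨b, h1, h2, h3, h4, h5, h6⟩
  · exact Or.inl (h.mono le_rfl hi.le)
  · rcases le_or_gt i b with hb | hb
    · exact Or.inl (h3.mono le_rfl hb)
    · have := (h5.mono (p' := i) (by omega) le_rfl).lt hi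
      exact Or.inr ⟨b, h1, hb, h3, h4, h5.mono le_rfl hi.le, by omega⟩

lemma Sees.shrink_left {E : ℕ → ℕ} {t t' i : ℕ} (h : Sees E t i) (ht : t < t') :
    Sees E t' i := by
  rcases h with h | ⟨b, h1, h2, h3, h4, h5, h6⟩
  · exact Or.inl (h.mono ht.le le_rfl)
  · rcases le_or_gt t' b with hb | hb
    · have := (h3.mono (q' := t') le_rfl hb).lt ht
      exact Or.inr ⟨b, hb, h2, h3.mono ht.le le_rfl, h4, h5, by omega⟩
    · exact Or.inl (h5.mono hb le_rfl)

lemma SeesAcross.not_decOn {E : ℕ → ℕ} {t i : ℕ} (h : SeesAcross E t i) : ¬ decOn E t i := by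
  obtain ⟨b, h1, h2, -, h4, -, -⟩ := h
  intro h
  have := h.step h1 h2
  omega

open Classical in
/-- The number of undecorated positions `t < i` seen from `i`. -/
noncomputable def leftCount (E : ℕ → ℕ) (D : ℕ → Bool) (i : ℕ) : ℕ :=
  ((Finset.range i).filter fun t => D t = false ∧ Sees E t i).card

open Classical in
/-- Splitting a count of seen positions into those in the same run and those in the adjacent one. -/
lemma card_sees_split (E : ℕ → ℕ) (D : ℕ → Bool) (s : Finset ℕ) (f g : ℕ → ℕ) :
    (s.filter fun t => D t = false ∧ Sees E (f t) (g t)).card =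
      (s.filter fun t => D t = false ∧ decOn E (f t) (g t)).card +
      (s.filter fun t => D t = false ∧ SeesAcross E (f t) (g t)).card := by
  rw [← Finset.card_union_of_disjoint]
  · congr 1
    ext t
    simp only [Finset.mem_filter, Finset.mem_union]
    unfold Sees
    tauto
  · rw [Finset.disjoint_filter]
    rintro t - ⟨-, h⟩ ⟨-, h'⟩
    exact h'.not_decOn h

lemma schedNum_undec {n : ℕ} {E : ℕ → ℕ} {D : ℕ → Bool} (hE : ∀ b < n, E b ≠ E (b + 1))
    {i : ℕ} (hi : i ≤ n) (hD : D i = false) : schedNum n E D i = leftCount E D i := by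
  classical
  have hD' : ¬ D i = true := by simp [hD]
  rw [schedNum, if_neg hD', leftCount, card_sees_split E D (Finset.range i) (fun t => t) (fun _ => i)]
  congr 1
  · congr 1
    ext t
    simp only [Finset.mem_filter, Finset.mem_Icc, runStart_le_iff, le_runEnd_iff E hi,
      Finset.mem_range]
    constructor
    · rintro ⟨⟨h1, h2, h3⟩, h4, h5⟩
      refine ⟨?_, h4, h1⟩
      by_contra hti
      rcases (not_lt.1 hti).eq_or_lt with h | h
      · subst h; omega
      · have := h3.lt h; omega
    · rintro ⟨h1, h2, h3⟩
      exact ⟨⟨h3, by omega, decOn_of_le h1.le⟩, h2, h3.lt h1⟩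
  · have hs := runStart_le_iff E (runStart E i) i
    have hsi : runStart E i ≤ i := (runStart_le_iff E i i).2 (decOn_of_le le_rfl)
    simp only [le_refl, true_iff] at hs
    split_ifs with h0
    · symm
      rw [Finset.card_eq_zero, Finset.filter_eq_empty_iff]
      rintro t - ⟨-, ht⟩
      rw [h0] at hs
      exact ht.not_decOn (hs.mono (by omega) le_rfl)
    · congr 1
      ext t
      simp only [Finset.mem_filter, Finset.mem_Icc, runStart_le_iff, Finset.mem_range]
      constructor
      · rintro ⟨⟨h1, h2⟩, h3, h4⟩
        -- the run of `i` cannot be extended to the left of its start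
        have hasc : E (runStart E i - 1) < E (runStart E i - 1 + 1) := by
          have hne := hE (runStart E i - 1) (by omega)
          by_contra hlt
          have : decOn E (runStart E i - 1) i := by
            refine decOn.trans (q := runStart E i) ?_ hs
            intro u hu
            simp only [Finset.mem_Ico] at hu
            have : u = runStart E i - 1 := by omega
            subst this
            omega
          have := (runStart_le_iff E _ i).2 this
          omega
        refine ⟨by omega, h3, runStart E i - 1, h2, by omega, h1, hasc, ?_, h4⟩
        exact hs.mono (by omega) le_rfl
      · rintro ⟨h1, h2, b, h3, h4, h5, h6, h7, h8⟩
        have hb := (runStart_le_iff E _ i).2 h7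
        have hb' : b < runStart E i := by
          by_contra hcon
          have := hs.step (not_lt.1 hcon) h4
          omega
        have hbe : runStart E i - 1 = b := by omega
        rw [hbe]
        exact ⟨⟨h5, h3⟩, h2, h8⟩

open Classical in
lemma schedNum_dec {n : ℕ} {E : ℕ → ℕ} {D : ℕ → Bool} (hE : ∀ b < n, E b ≠ E (b + 1))
    {i : ℕ} (hi : i ≤ n) (hD : D i = true) : schedNum n E D i =
      ((Finset.Icc (i + 1) n).filter fun t => D t = false ∧ Sees E i t).card := by
  rw [schedNum, if_pos hD, card_sees_split E D (Finset.Icc (i + 1) n) (fun _ => i) (fun t => t)]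
  congr 1
  · congr 1
    ext t
    simp only [Finset.mem_filter, Finset.mem_Icc, runStart_le_iff, le_runEnd_iff E hi]
    constructor
    · rintro ⟨⟨h1, h2, h3⟩, h4, h5⟩
      refine ⟨⟨?_, h2⟩, h4, h3⟩
      by_contra hti
      rcases (show t ≤ i by omega).eq_or_lt with h | h
      · subst h; omega
      · have := h1.lt h; omega
    · rintro ⟨⟨h1, h2⟩, h3, h4⟩
      exact ⟨⟨decOn_of_le (by omega), h2, h4⟩, h3, h4.lt (by omega)⟩
  · have he := (le_runEnd_iff E (q := runEnd n E i) hi).1 le_rfl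
    have hie : i ≤ runEnd n E i := (le_runEnd_iff E hi).2 ⟨hi, decOn_of_le le_rfl⟩
    split_ifs with h0
    · congr 1
      ext t
      simp only [Finset.mem_filter, Finset.mem_Icc,
        le_runEnd_iff E (show runEnd n E i + 1 ≤ n from h0)]
      constructor
      · rintro ⟨⟨h1, h2, h2'⟩, h3, h4⟩
        -- the run of `i` cannot be extended to the right of its end
        have hasc : E (runEnd n E i) < E (runEnd n E i + 1) := by
          have hne := hE (runEnd n E i) h0
          by_contra hlt
          have : decOn E i (runEnd n E i + 1) := by
            refine he.2.trans ?_
            intro u hu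
            simp only [Finset.mem_Ico] at hu
            have : u = runEnd n E i := by omega
            subst this
            omega
          have := (le_runEnd_iff E hi).2 ⟨h0, this⟩
          omega
        exact ⟨⟨by omega, h2⟩, h3, runEnd n E i, hie, by omega, he.2, hasc, h2', h4⟩
      · rintro ⟨⟨h1, h2⟩, h3, b, h4, h5, h6, h7, h8, h9⟩
        have hb := (le_runEnd_iff E (q := b) hi).2 ⟨by omega, h6⟩
        have hb' : ¬ b < runEnd n E i := fun hcon => by
          have := he.2.step h4 hcon
          omega
        have hbe : runEnd n E i = b := by omega
        rw [hbe]
        exact ⟨⟨h5, h2, h8⟩, h3, h9⟩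
    · symm
      rw [Finset.card_eq_zero, Finset.filter_eq_empty_iff]
      rintro t ht ⟨-, hs⟩
      simp only [Finset.mem_Icc] at ht
      exact hs.not_decOn (he.2.mono le_rfl (by omega))

/-! ### Intermediate values -/

/-- Going from an undecorated position to the next one adds at most that position to the set of
seen undecorated positions. -/
lemma leftCount_le_succ {E : ℕ → ℕ} {D : ℕ → Bool} {v w : ℕ} (hvw : v < w)
    (hnext : ∀ t, t < w → D t = false → t ≤ v) : leftCount E D w ≤ leftCount E D v + 1 := by
  classical
  refine le_trans (Finset.card_le_card ?_) (Finset.card_insert_le v _)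
  intro t ht
  simp only [Finset.mem_filter, Finset.mem_range, Finset.mem_insert] at ht ⊢
  rcases (hnext t ht.1 ht.2.1).eq_or_lt with h | h
  · exact Or.inl h
  · exact Or.inr ⟨h, ht.2.1, ht.2.2.shrink_right hvw⟩

/-- Discrete continuity: `leftCount` attains, at undecorated positions up to `w`, every positive
value up to `leftCount w`. -/
lemma leftCount_attains {E : ℕ → ℕ} {D : ℕ → Bool} (h0 : D 0 = false) (w : ℕ)
    (hw : D w = false) {m : ℕ} (hm : 1 ≤ m) (hmw : m ≤ leftCount E D w) :
    ∃ v, 1 ≤ v ∧ v ≤ w ∧ D v = false ∧ leftCount E D v = m := by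
  classical
  induction w using Nat.strong_induction_on with
  | _ w ih =>
    have hw1 : 1 ≤ w := by
      by_contra hcon
      have : w = 0 := by omega
      subst this
      simp [leftCount] at hmw
      omega
    rcases hmw.eq_or_lt with h | h
    · exact ⟨w, hw1, le_rfl, hw, h.symm⟩
    · have hne : ((Finset.range w).filter fun t => D t = false).Nonempty :=
        ⟨0, by simp only [Finset.mem_filter, Finset.mem_range]; exact ⟨hw1, h0⟩⟩
      obtain ⟨v, hv, hmax⟩ := Finset.exists_max_image _ id hne
      simp only [Finset.mem_filter, Finset.mem_range, id] at hv hmax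
      have hle := leftCount_le_succ (E := E) (D := D) hv.1 fun t ht hDt => hmax t ⟨ht, hDt⟩
      obtain ⟨u, hu1, hu2, hu3⟩ := ih v hv.1 hv.2 (by omega)
      exact ⟨u, hu1, by omega, hu3⟩

/-- The set of schedule numbers is closed under passing to smaller positive integers. -/
lemma schedNum_attains {n : ℕ} {E : ℕ → ℕ} {D : ℕ → Bool} (hE : ∀ b < n, E b ≠ E (b + 1))
    (h0 : D 0 = false) {i : ℕ} (hi1 : 1 ≤ i) (hi : i ≤ n) {k : ℕ} (hk : 1 ≤ k)
    (hki : k ≤ schedNum n E D i) : ∃ v, 1 ≤ v ∧ v ≤ n ∧ schedNum n E D v = k := by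
  classical
  rcases hki.eq_or_lt with h | hlt
  · exact ⟨i, hi1, hi, h.symm⟩
  -- it is enough to bound `k` by the schedule number of an undecorated position
  suffices ∃ w ≤ n, D w = false ∧ k ≤ leftCount E D w by
    obtain ⟨w, hwn, hw, hkw⟩ := this
    obtain ⟨v, hv1, hvw, hv, hvk⟩ := leftCount_attains h0 w hw hk hkw
    exact ⟨v, hv1, by omega, by rw [schedNum_undec hE (by omega) hv, hvk]⟩
  rcases Bool.eq_false_or_eq_true (D i) with hD | hD
  · rw [schedNum_dec hE hi hD] at hlt
    have hne : ((Finset.Icc (i + 1) n).filter fun t => D t = false ∧ Sees E i t).Nonempty :=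
      Finset.card_pos.1 (by omega)
    obtain ⟨w, hw, hmax⟩ := Finset.exists_max_image _ id hne
    have hcard := Finset.card_erase_add_one hw
    simp only [Finset.mem_filter, Finset.mem_Icc, id] at hw hmax
    refine ⟨w, hw.1.2, hw.2.1, ?_⟩
    refine (Nat.le_of_lt_succ (by omega)).trans (Finset.card_le_card (s :=
      ((Finset.Icc (i + 1) n).filter fun t => D t = false ∧ Sees E i t).erase w) ?_)
    intro t ht
    simp only [Finset.mem_erase, Finset.mem_filter, Finset.mem_Icc, Finset.mem_range] at ht ⊢
    have htw := hmax t ht.2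
    exact ⟨lt_of_le_of_ne htw ht.1, ht.2.2.1, hw.2.2.shrink_left (by omega)⟩
  · exact ⟨i, hi, hD, by rw [← schedNum_undec hE hi hD]; omega⟩

lemma ent_ne_succ {n : ℕ} (σ : Equiv.Perm (Fin n)) (b : ℕ) (hb : b < n) :
    ent σ b ≠ ent σ (b + 1) := by
  unfold ent
  rw [dif_pos (show 1 ≤ b + 1 ∧ b + 1 ≤ n by omega)]
  split_ifs with h
  · intro heq
    have h1 := σ.injective (Fin.ext (Nat.succ.inj heq))
    have h2 := congrArg Fin.val h1
    simp only at h2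
    omega
  · omega

end QEuler

/-- If all schedule numbers of a decorated permutation of `{1,…,n}`
are positive, then the set of schedule numbers is `{1,…,j}` for some `j ≥ 1`. -/
theorem schedule_set_is_initial_interval {n : ℕ} (hn : 1 ≤ n)
    (σ : Equiv.Perm (Fin n)) (D : Finset (Fin n))
    (hpos : ∀ i ∈ Finset.Icc 1 n, 0 < schedNum n (ent σ) (isDec D) i) :
    ∃ j, 1 ≤ j ∧
      (Finset.Icc 1 n).image (fun i => schedNum n (ent σ) (isDec D) i) = Finset.Icc 1 j := by
  classical
  have hE := ent_ne_succ σ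
  have h0 : isDec D 0 = false := by simp [isDec]
  obtain ⟨i, hi, hmax⟩ := Finset.exists_max_image (Finset.Icc 1 n)
    (fun i => schedNum n (ent σ) (isDec D) i) ⟨1, by simp [hn]⟩
  refine ⟨schedNum n (ent σ) (isDec D) i, hpos i hi, ?_⟩
  ext k
  simp only [Finset.mem_image, Finset.mem_Icc]
  rw [Finset.mem_Icc] at hi
  constructor
  · rintro ⟨t, ht, rfl⟩
    exact ⟨hpos t (Finset.mem_Icc.2 ht), hmax t (Finset.mem_Icc.2 ht)⟩
  · rintro ⟨hk, hki⟩
    obtain ⟨v, hv1, hvn, hv⟩ := schedNum_attains hE h0 hi.1 hi.2 hk hki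
    exact ⟨v, ⟨hv1, hvn⟩, hv⟩
end

section
/- Let τ ∈ S_n, let 1 ≤ k ≤ n+1, and let σ = k+τ ∈ S_{n+1}. For all 0 ≤ i ≤ j ≤ n: τ_i,…,τ_j is a cyclic run of τ if and only if σ_{i+1},…,σ_{j+1} is a cyclic run of σ. Moreover, for all 1 ≤ j ≤ n: (τ_0,…,τ_j is a cyclic run of τ and τ_j + k > n+1) if and only if σ_0,…,σ_{j+1} is a cyclic run of σ. -/
/-!
A word with entries in `{0,…,m-1}` is a cyclic run modulo `m` exactly when it decreases for the
usual order rotated at some cut `c` (`exists_shift_iff_exists_cut`). This description does not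
mention `m`, and it is insensitive to lowering all entries of a positive word by one.

The entry `σ_{i+1}` is one more than the residue of `τ_i + (k - 1)` modulo `n + 1`
(`shiftEnt_succ`). Hence the word `σ_{i+1},…,σ_{j+1}` is a cyclic run modulo `n + 2` if and only if
the residues of `τ_t + (k - 1)` form one modulo `n + 1`, and a constant shift is harmless; this is
the first equivalence (`isCyclicRun_shift_iff`).

For the second, a cyclic run starting at `0` is the same thing as `0` followed by a word of positive
entries decreasing in the usual sense. So `σ_0,…,σ_{j+1}` is a cyclic run if and only if the residues
of `τ_t + (k - 1)`, `0 ≤ t ≤ j`, decrease (`isCyclicRun_shift_zero_iff`). These start with `k - 1`.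
If they decrease, the last one is below `k - 1`, which forces `τ_j + k - 1 ≥ n + 1`. Conversely, if
`τ_0,…,τ_j` is a cyclic run then `τ_1 > ⋯ > τ_j`, and `τ_j + k - 1 ≥ n + 1` makes all of
`τ_1,…,τ_j` wrap around exactly once, so that the residues decrease from `k - 1`.
-/

open Finset

open QEuler

/-! ### Rotated orders and cyclic runs -/

/-- The strict order `x < y` on `ℕ` rotated at the cut `c`: the values `≥ c` come first, followed
by the values `< c`, each block in its usual order. -/
def CutLT (c x y : ℕ) : Prop := (c ≤ x ∧ y < c) ∨ (x < y ∧ (y < c ∨ c ≤ x))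

/-- Adding `k` modulo `m` rotates the order on `{0,…,m-1}` at the cut `m - k % m`. -/
lemma add_mod_lt_iff_cutLT {m x y : ℕ} (k : ℕ) (hx : x < m) (hy : y < m) :
    (x + k) % m < (y + k) % m ↔ CutLT (m - k % m) x y := by
  have hk : k % m < m := Nat.mod_lt _ (by omega)
  have key : ∀ z, z < m → (z + k) % m = if z + k % m < m then z + k % m else z + k % m - m := by
    intro z hz
    rw [← Nat.add_mod_mod]
    split_ifs with h
    · exact Nat.mod_eq_of_lt h
    · rw [Nat.mod_eq_sub_mod (by omega), Nat.mod_eq_of_lt (by omega)]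
  rw [key x hx, key y hy]
  unfold CutLT
  split_ifs <;> omega

/-- Being decreasing for some cyclic shift modulo `m` does not depend on `m`, as long as all the
entries are residues: it amounts to being decreasing for some rotated order. -/
lemma exists_shift_iff_exists_cut {m : ℕ} {E : ℕ → ℕ} {i j : ℕ} (hE : ∀ t, E t < m) :
    (∃ k : ℕ, ∀ t ∈ Finset.Ico i j, (E (t + 1) + k) % m < (E t + k) % m) ↔
      ∃ c : ℕ, ∀ t ∈ Finset.Ico i j, CutLT c (E (t + 1)) (E t) := by
  have hm := hE 0
  constructor
  · rintro ⟨k, h⟩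
    exact ⟨m - k % m, fun t ht => (add_mod_lt_iff_cutLT k (hE _) (hE _)).1 (h t ht)⟩
  · rintro ⟨c, h⟩
    -- a cut beyond all entries, like the cut at `0`, leaves the order unchanged
    refine ⟨if c ≤ m then m - c else 0, fun t ht => ?_⟩
    rw [add_mod_lt_iff_cutLT _ (hE _) (hE _)]
    have h1 := h t ht
    have hx := hE (t + 1)
    have hy := hE t
    have hc : c = 0 ∨ (0 < c ∧ c ≤ m) ∨ m < c := by omega
    rcases hc with rfl | ⟨h0, h2⟩ | h2
    · simp only [Nat.zero_le, if_true, Nat.sub_zero, Nat.mod_self]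
      unfold CutLT at *; omega
    · rw [if_pos h2, Nat.mod_eq_of_lt (by omega), Nat.sub_sub_self h2]
      exact h1
    · rw [if_neg (by omega), Nat.zero_mod]
      unfold CutLT at *; omega

/-- A word starting at `0` which decreases for the order rotated at `c` has all its later entries
`≥ c > 0`, since `0` is the smallest value of the upper block. -/
lemma CutLT.cut_le_of_zero {c j : ℕ} {E : ℕ → ℕ} (h0 : E 0 = 0)
    (h : ∀ t ∈ Finset.Ico 0 j, CutLT c (E (t + 1)) (E t)) :
    ∀ t, t < j → 0 < c ∧ c ≤ E (t + 1) := by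
  intro t
  induction t with
  | zero =>
    intro ht
    have := h 0 (by simp [ht])
    unfold CutLT at this
    omega
  | succ t ih =>
    intro ht
    have h1 := ih (by omega)
    have := h (t + 1) (by simp [ht])
    unfold CutLT at this
    omega

/-- A cyclic run starting at `0` decreases in the usual sense after its first entry. -/
lemma CutLT.lt_of_zero {c j : ℕ} {E : ℕ → ℕ} (h0 : E 0 = 0)
    (h : ∀ t ∈ Finset.Ico 0 j, CutLT c (E (t + 1)) (E t)) (t : ℕ) (ht : t + 1 < j) :
    E (t + 1 + 1) < E (t + 1) := by
  have h1 := CutLT.cut_le_of_zero h0 h t (by omega)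
  have := h (t + 1) (by simp [ht])
  unfold CutLT at this
  omega

/-! ### Entries of `τ` and of `k + τ` -/

lemma ent_zero {n : ℕ} (σ : Equiv.Perm (Fin n)) : ent σ 0 = 0 := by simp [ent]

lemma ent_lt {n : ℕ} (σ : Equiv.Perm (Fin n)) (i : ℕ) : ent σ i < n + 1 := by
  unfold ent
  split_ifs <;> omega

lemma shiftEnt_zero (n k : ℕ) (E : ℕ → ℕ) : shiftEnt n k E 0 = 0 := by simp [shiftEnt]

/-- The representative of `k + E i` in `{1,…,n+1}` is one more than the residue of
`E i + (k - 1)`. -/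
lemma shiftEnt_succ {n k : ℕ} (hk : 1 ≤ k) (E : ℕ → ℕ) (i : ℕ) :
    shiftEnt n k E (i + 1) = (E i + (k - 1)) % (n + 1) + 1 := by
  obtain ⟨k, rfl⟩ := Nat.exists_eq_add_of_le' hk
  have e : k + 1 + E i = (E i + k) + 1 := by ring
  simp only [shiftEnt, Nat.add_one_ne_zero, if_false, Nat.add_sub_cancel, e]
  have hlt : (E i + k) % (n + 1) < n + 1 := Nat.mod_lt _ (by omega)
  rw [← Nat.mod_add_mod]
  rcases Nat.lt_or_ge ((E i + k) % (n + 1)) n with h | h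
  · rw [Nat.mod_eq_of_lt (a := (E i + k) % (n + 1) + 1) (by omega), if_neg (by omega)]
  · have h' : (E i + k) % (n + 1) = n := by omega
    rw [h', Nat.mod_self, if_pos rfl]

lemma shiftEnt_lt {n k : ℕ} (hk : 1 ≤ k) (E : ℕ → ℕ) (i : ℕ) : shiftEnt n k E i < n + 2 := by
  cases i with
  | zero => rw [shiftEnt_zero]; omega
  | succ i =>
    rw [shiftEnt_succ hk]
    have := Nat.mod_lt (E i + (k - 1)) (show 0 < n + 1 by omega)
    omega

/-! ### Transporting cyclic runs along the shift -/

lemma exists_shift_add {m : ℕ} (hm : 0 < m) (a : ℕ) (E : ℕ → ℕ) (i j : ℕ) :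
    (∃ k : ℕ, ∀ t ∈ Finset.Ico i j,
        ((E (t + 1) + a) % m + k) % m < ((E t + a) % m + k) % m) ↔
      ∃ k : ℕ, ∀ t ∈ Finset.Ico i j, (E (t + 1) + k) % m < (E t + k) % m := by
  simp only [Nat.mod_add_mod]
  constructor
  · rintro ⟨k, h⟩
    exact ⟨a + k, fun t ht => by simpa [add_assoc] using h t ht⟩
  · rintro ⟨k, h⟩
    -- `k + (m - 1) * a` is a nonnegative representative of `k - a` modulo `m`
    refine ⟨k + (m - 1) * a, fun t ht => ?_⟩
    have e : ∀ x, (x + a + (k + (m - 1) * a)) % m = (x + k) % m := by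
      intro x
      obtain ⟨m, rfl⟩ := Nat.exists_eq_add_of_le' hm
      have : x + a + (k + (m + 1 - 1) * a) = x + k + (m + 1) * a := by
        rw [Nat.add_sub_cancel]; ring
      rw [this, Nat.add_mul_mod_self_left]
    rw [e, e]
    exact h t ht

/-- The cut for a word of positive entries may be lowered by one along with the entries. -/
lemma exists_cut_succ_iff (F : ℕ → ℕ) (i j : ℕ) :
    (∃ c : ℕ, ∀ t ∈ Finset.Ico i j, CutLT c (F (t + 1) + 1) (F t + 1)) ↔
      ∃ c : ℕ, ∀ t ∈ Finset.Ico i j, CutLT c (F (t + 1)) (F t) := by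
  constructor
  · rintro ⟨c, h⟩
    refine ⟨c - 1, fun t ht => ?_⟩
    have := h t ht
    unfold CutLT at *
    omega
  · rintro ⟨c, h⟩
    refine ⟨c + 1, fun t ht => ?_⟩
    have := h t ht
    unfold CutLT at *
    omega

lemma isCyclicRun_shift_iff {n k : ℕ} (hk : 1 ≤ k) (E : ℕ → ℕ) (i j : ℕ) :
    IsCyclicRun n E i j ↔ IsCyclicRun (n + 1) (shiftEnt n k E) (i + 1) (j + 1) := by
  unfold IsCyclicRun
  rw [exists_shift_iff_exists_cut (shiftEnt_lt hk E), ← exists_shift_add (by omega) (k - 1),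
    exists_shift_iff_exists_cut (E := fun t => (E t + (k - 1)) % (n + 1))
      (fun t => Nat.mod_lt _ (by omega)),
    ← exists_cut_succ_iff (fun t => (E t + (k - 1)) % (n + 1))]
  have hcut : ∀ c, (∀ t ∈ Finset.Ico (i + 1) (j + 1),
        CutLT c (shiftEnt n k E (t + 1)) (shiftEnt n k E t)) ↔
      ∀ t ∈ Finset.Ico i j, CutLT c ((E (t + 1) + (k - 1)) % (n + 1) + 1)
        ((E t + (k - 1)) % (n + 1) + 1) := by
    intro c
    simp only [← shiftEnt_succ hk]
    constructor
    · intro h t ht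
      rw [Finset.mem_Ico] at ht
      exact h (t + 1) (by rw [Finset.mem_Ico]; omega)
    · intro h t ht
      rw [Finset.mem_Ico] at ht
      obtain ⟨s, rfl⟩ := Nat.exists_eq_add_of_le' (show 1 ≤ t by omega)
      exact h s (by rw [Finset.mem_Ico]; omega)
  refine and_congr (by omega) (and_congr (by omega) ?_)
  exact exists_congr fun c => (hcut c).symm

/-- An initial segment `0, σ_1, …, σ_{j+1}` of the shifted word is a cyclic run exactly when
`σ_1 > ⋯ > σ_{j+1}`, a condition stated here on the residues `σ_{t+1} - 1`. -/
lemma isCyclicRun_shift_zero_iff {n k : ℕ} (hk : 1 ≤ k) (E : ℕ → ℕ) {j : ℕ} (hj : j ≤ n) :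
    IsCyclicRun (n + 1) (shiftEnt n k E) 0 (j + 1) ↔
      ∀ t < j, (E (t + 1) + (k - 1)) % (n + 1) < (E t + (k - 1)) % (n + 1) := by
  unfold IsCyclicRun
  rw [exists_shift_iff_exists_cut (shiftEnt_lt hk E)]
  constructor
  · rintro ⟨-, -, c, h⟩ t ht
    have := CutLT.lt_of_zero (shiftEnt_zero n k E) h t (by omega)
    rw [shiftEnt_succ hk, shiftEnt_succ hk] at this
    omega
  · intro h
    -- the cut at `1` makes `0` the largest value
    refine ⟨by omega, by omega, 1, fun t ht => ?_⟩
    rw [Finset.mem_Ico] at ht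
    cases t with
    | zero =>
      rw [shiftEnt_zero, shiftEnt_succ hk]
      unfold CutLT; omega
    | succ t =>
      have := h t (by omega)
      rw [shiftEnt_succ hk, shiftEnt_succ hk]
      unfold CutLT; omega

/-- Lemma on cyclic runs and the shift `k + τ`.
For `τ ∈ S_n`, `1 ≤ k ≤ n+1` and `σ = k + τ ∈ S_{n+1}`:
for `0 ≤ i ≤ j ≤ n`, `τ_i,…,τ_j` is a cyclic run of `τ` iff `σ_{i+1},…,σ_{j+1}` is a
cyclic run of `σ`; and for `1 ≤ j ≤ n`, (`τ_0,…,τ_j` is a cyclic run and `τ_j + k > n+1`)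
iff `σ_0,…,σ_{j+1}` is a cyclic run. -/
theorem cyclic_runs_of_shift {n : ℕ} (τ : Equiv.Perm (Fin n))
    (k : ℕ) (hk1 : 1 ≤ k) (hk2 : k ≤ n + 1) :
    (∀ i j, i ≤ j → j ≤ n →
        (IsCyclicRun n (ent τ) i j ↔
          IsCyclicRun (n + 1) (shiftEnt n k (ent τ)) (i + 1) (j + 1))) ∧
    (∀ j, 1 ≤ j → j ≤ n →
        ((IsCyclicRun n (ent τ) 0 j ∧ n + 1 < ent τ j + k) ↔
          IsCyclicRun (n + 1) (shiftEnt n k (ent τ)) 0 (j + 1))) := by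
  refine ⟨fun i j _ _ => isCyclicRun_shift_iff hk1 _ i j, fun j hj1 hjn => ?_⟩
  rw [isCyclicRun_shift_zero_iff hk1 _ hjn]
  have h0 := ent_zero τ
  have hlt := ent_lt τ
  generalize ent τ = E at h0 hlt ⊢
  constructor
  · rintro ⟨⟨-, -, h⟩, hjk⟩
    rw [exists_shift_iff_exists_cut hlt] at h
    obtain ⟨c, h⟩ := h
    have hdec := CutLT.lt_of_zero h0 h
    have hmin : ∀ d, d < j → E j ≤ E (j - d) := by
      intro d
      induction d with
      | zero => intro _; exact le_rfl
      | succ d ih =>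
        intro hd
        have h1 := ih (by omega)
        have h2 := hdec (j - (d + 1) - 1) (by omega)
        rw [show j - (d + 1) - 1 + 1 = j - (d + 1) by omega,
          show j - (d + 1) + 1 = j - d by omega] at h2
        omega
    -- every entry after the initial `0` wraps around exactly once
    have hval : ∀ t, 1 ≤ t → t ≤ j → n + 1 ≤ E t + (k - 1) ∧
        (E t + (k - 1)) % (n + 1) = E t + (k - 1) - (n + 1) := by
      intro t ht1 htj
      have h1 := hmin (j - t) (by omega)
      rw [Nat.sub_sub_self htj] at h1
      have h2 := hlt t
      refine ⟨by omega, ?_⟩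
      rw [Nat.mod_eq_sub_mod (by omega), Nat.mod_eq_of_lt (by omega)]
    intro t ht
    have h1 := hval (t + 1) (by omega) (by omega)
    rw [h1.2]
    cases t with
    | zero =>
      rw [h0, Nat.zero_add (k - 1), Nat.mod_eq_of_lt (a := k - 1) (by omega)]
      have := hlt (0 + 1)
      rw [Nat.zero_add 1] at *
      omega
    | succ t =>
      have h2 := hval (t + 1) (by omega) (by omega)
      rw [h2.2]
      have := hdec t (by omega)
      omega
  · intro h
    refine ⟨⟨by omega, hjn, k - 1, fun t ht => h t (Finset.mem_Ico.1 ht).2⟩, ?_⟩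
    have hbound : ∀ t, t < j → (E (t + 1) + (k - 1)) % (n + 1) < k - 1 := by
      intro t
      induction t with
      | zero =>
        intro ht
        have := h 0 ht
        rwa [h0, Nat.zero_add (k - 1), Nat.mod_eq_of_lt (a := k - 1) (by omega)] at this
      | succ t ih =>
        intro ht
        exact (h (t + 1) ht).trans (ih (by omega))
    have h1 := hbound (j - 1) (by omega)
    rw [Nat.sub_add_cancel hj1] at h1
    -- without wrapping around, the residue would be at least `k - 1`
    by_contra hcon
    rw [Nat.mod_eq_of_lt (by omega)] at h1
    omega
end
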